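/- arXiv:2006.09608 — 2 statements merged into one kernel-verified Lean document; each statement's English description precedes it below -/
import Mathlib

section
/- The space T(I) has the strongly discrete approaching property (SDAP): for every continuous map ε : T(I) → (0,1), every compact metric space K, and every continuous map f : K × ℕ → T(I), there exists a continuous map g : K × ℕ → T(I) such that the family of sets {g(K × {n}) : n ∈ ℕ} is discrete in T(I) (every point of T(I) has a neighborhood meeting g(K × {n}) for at most one n) and d(f(k,n), g(k,n)) < ε(f(k,n)) for every (k,n) ∈ K × ℕ. -/
open unitInterval

/-- A continuous self-map of the unit interval is (topologically) transitive if for every pair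
of nonempty open sets `U, V ⊆ I` there is a positive integer `n` with `U ∩ f⁻ⁿ(V) ≠ ∅`. -/
def IsTransitiveMap (f : C(I, I)) : Prop :=
  ∀ U V : Set I, IsOpen U → IsOpen V → U.Nonempty → V.Nonempty →
    ∃ n : ℕ, 0 < n ∧ (U ∩ (f : I → I)^[n] ⁻¹' V).Nonempty

/-- `T(I)`: the set of transitive maps in `C(I, I)`. -/
def TransSet : Set C(I, I) := {f | IsTransitiveMap f}

/-!
The perturbation `g (k, n)` is a zigzag. Put `η = ε (f (k, n)) / 4`, cut `I` into `N` equal cells,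
and let `g (k, n)` be the piecewise linear map whose value at the node `i / N` is
`f (i / N) + (-1) ^ i * η`, clamped to `[0, 1]` (`zigzag`). By compactness of `K`, a large `N = N n`
works for all `k` at once, in the sense that `f (k, n)` varies by at most `η / 4` on each cell and
`4 ≤ N * η` (`IsFine`, `eventually_isFine`).

*Transitivity* (`transitive_of_expanding_cover`). On each cell the zigzag has slope at least `4` in
absolute value, so an interval that contains no cell has an image containing an interval twice as
long; hence some iterate of every interval covers a cell. Moreover the image of a cell `J` covers
every cell that meets `f J`. So the forward images of an open set cover cells along every
`f`-orbit starting in some cell, and such orbits reach every open set since `f` is transitive.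

*Discreteness.* The zigzag jumps by at least `η` over a distance `1 / N`. If `g (k, n)` is close
to a transitive `h`, then `ε (f (k, n))` is bounded below by a constant depending only on `h`:
either `f (k, n)` is close to `h`, or it is far from `g (k, n)`, which is only allowed when
`ε (f (k, n))` is large. As `h` is uniformly continuous, this bounds `N`, hence `n`, so the family
of images is locally finite. The images are compact, and they are pairwise disjoint because a zigzag
determines its number of cells (`zigzag_ne`).
-/

/-! ### Expanding maps that cover cells -/

/-- The `i`-th of the `N` closed cells `[i / N, (i + 1) / N]` of the unit interval. -/
def cell (N i : ℕ) : Set I := {x | (i : ℝ) ≤ N * (x : ℝ) ∧ N * (x : ℝ) ≤ i + 1}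

/-- The point `i / N` of the unit interval; only meaningful for `i ≤ N`, being `1` for larger `i`
when `0 < N`. -/
noncomputable def node (N i : ℕ) : I := Set.projIcc 0 1 zero_le_one ((i : ℝ) / N)

lemma node_coe {N i : ℕ} (hN : 0 < N) (hi : i ≤ N) : ((node N i : I) : ℝ) = (i : ℝ) / N := by
  have h : (i : ℝ) / N ∈ Set.Icc (0 : ℝ) 1 := by
    refine ⟨by positivity, ?_⟩
    rw [div_le_one (by exact_mod_cast hN)]
    exact_mod_cast hi
  rw [node, Set.projIcc_of_mem _ h]

lemma mul_node {N i : ℕ} (hN : 0 < N) (hi : i ≤ N) : (N : ℝ) * (node N i : I) = i := by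
  rw [node_coe hN hi]
  have : (N : ℝ) ≠ 0 := by exact_mod_cast hN.ne'
  field_simp

lemma node_mem_cell_left {N i : ℕ} (hN : 0 < N) (hi : i < N) : node N i ∈ cell N i := by
  constructor <;> rw [mul_node hN hi.le]
  linarith

lemma node_mem_cell_right {N i : ℕ} (hN : 0 < N) (hi : i < N) : node N (i + 1) ∈ cell N i := by
  constructor <;> rw [mul_node hN hi] <;> push_cast <;> linarith

lemma exists_mem_cell {N : ℕ} (hN : 0 < N) (x : I) : ∃ i < N, x ∈ cell N i := by
  have hN' : (0 : ℝ) < N := by exact_mod_cast hN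
  rcases lt_or_eq_of_le x.2.2 with h | h
  · refine ⟨⌊(N : ℝ) * x⌋₊, ?_, ?_, ?_⟩
    · rw [Nat.floor_lt (mul_nonneg hN'.le x.2.1)]
      nlinarith
    · exact Nat.floor_le (mul_nonneg hN'.le x.2.1)
    · exact (Nat.lt_floor_add_one _).le
  · refine ⟨N - 1, by omega, ?_, ?_⟩ <;> rw [h, Nat.cast_sub hN] <;> simp

lemma uIcc_subset_image (g : C(I, I)) {s : Set I} (x y : I) (h : Set.uIcc x y ⊆ s) :
    Set.uIcc (g x) (g y) ⊆ g '' s :=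
  (intermediate_value_uIcc g.continuous.continuousOn).trans (Set.image_mono h)

lemma exists_interval_of_expanding {g : C(I, I)} {s : Set I} {x y : I} (h : Set.uIcc x y ⊆ s)
    {r : ℝ} (hr : r ≤ |(g x : ℝ) - g y|) (hr0 : 0 < r) :
    ∃ c d : I, c < d ∧ r ≤ (d : ℝ) - c ∧ Set.Icc c d ⊆ g '' s := by
  have hsub := uIcc_subset_image g x y h
  rcases le_total (g x) (g y) with hl | hl
  · have hl' : (g x : ℝ) ≤ g y := hl
    rw [abs_of_nonpos (by linarith)] at hr
    rw [Set.uIcc_of_le hl] at hsub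
    exact ⟨g x, g y, Subtype.coe_lt_coe.1 (by linarith), by linarith, hsub⟩
  · have hl' : (g y : ℝ) ≤ g x := hl
    rw [abs_of_nonneg (by linarith)] at hr
    rw [Set.uIcc_of_ge hl] at hsub
    exact ⟨g y, g x, Subtype.coe_lt_coe.1 (by linarith), by linarith, hsub⟩

lemma cell_subset_or_doubling {g : C(I, I)} {N : ℕ} (hN : 0 < N)
    (hexp : ∀ i < N, ∀ x ∈ cell N i, ∀ y ∈ cell N i, 4 * |(x : ℝ) - y| ≤ |(g x : ℝ) - g y|)
    {c d : I} (hcd : c < d) :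
    (∃ i < N, cell N i ⊆ Set.Icc c d) ∨
      ∃ c' d' : I, c' < d' ∧ 2 * ((d : ℝ) - c) ≤ (d' : ℝ) - c' ∧
        Set.Icc c' d' ⊆ g '' Set.Icc c d := by
  have hN' : (0 : ℝ) < N := by exact_mod_cast hN
  have hcd' : (c : ℝ) < d := hcd
  by_cases hcell : ∃ i < N, cell N i ⊆ Set.Icc c d
  · exact Or.inl hcell
  right
  push Not at hcell
  obtain ⟨i, hi, hci⟩ := exists_mem_cell hN c
  by_cases hd : (N : ℝ) * d ≤ i + 1
  · have hdi : d ∈ cell N i := ⟨by nlinarith [hci.1], hd⟩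
    refine exists_interval_of_expanding (x := c) (y := d) (by rw [Set.uIcc_of_le hcd.le]) ?_
      (by linarith)
    have := hexp i hi c hci d hdi
    rw [abs_sub_comm (c : ℝ), abs_of_pos (sub_pos.2 hcd')] at this
    linarith
  · push Not at hd
    have hi1 : i + 1 < N := by
      have : (N : ℝ) * d ≤ N := by nlinarith [d.2.2]
      exact_mod_cast hd.trans_le this
    set e := node N (i + 1) with he
    have hNe : (N : ℝ) * e = i + 1 := by rw [he, mul_node hN hi1.le]; push_cast; ring
    have hce : (c : ℝ) ≤ e := le_of_mul_le_mul_left (by rw [hNe]; exact hci.2) hN'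
    have hed : (e : ℝ) < d := lt_of_mul_lt_mul_left (by rw [hNe]; exact hd) hN'.le
    -- Otherwise the cell `i + 1` would be contained in `[c, d]`.
    have hd2 : (N : ℝ) * d ≤ (i + 1 : ℕ) + 1 := by
      by_contra hlt
      push Not at hlt
      refine hcell (i + 1) hi1 fun x hx => ⟨?_, ?_⟩
      · have h1 := hx.1
        push_cast at h1
        exact Subtype.coe_le_coe.1 (hce.trans (le_of_mul_le_mul_left (by rw [hNe]; exact h1) hN'))
      · exact Subtype.coe_le_coe.1 (le_of_mul_le_mul_left (hx.2.trans hlt.le) hN')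
    -- One of `[c, e]`, `[e, d]` has at least half the length of `[c, d]`.
    rcases le_total ((d : ℝ) - c) (2 * (e - c)) with hh | hh
    · refine exists_interval_of_expanding (x := c) (y := e) ?_ ?_ (by linarith)
      · rw [Set.uIcc_of_le (show c ≤ e from hce)]
        exact Set.Icc_subset_Icc_right (Subtype.coe_le_coe.1 hed.le)
      · have := hexp i hi c hci e (node_mem_cell_right hN hi)
        rw [abs_sub_comm (c : ℝ), abs_of_nonneg (sub_nonneg.2 hce)] at this
        linarith
    · refine exists_interval_of_expanding (x := e) (y := d) ?_ ?_ (by linarith)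
      · rw [Set.uIcc_of_le (show e ≤ d from hed.le)]
        exact Set.Icc_subset_Icc_left (Subtype.coe_le_coe.1 hce)
      · have := hexp (i + 1) hi1 e (node_mem_cell_left hN hi1) d
          ⟨by push_cast; exact hd.le, hd2⟩
        rw [abs_sub_comm (e : ℝ), abs_of_pos (sub_pos.2 hed)] at this
        linarith

lemma exists_cell_subset_iterate {g : C(I, I)} {N : ℕ} (hN : 0 < N)
    (hexp : ∀ i < N, ∀ x ∈ cell N i, ∀ y ∈ cell N i, 4 * |(x : ℝ) - y| ≤ |(g x : ℝ) - g y|)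
    {c d : I} (hcd : c < d) : ∃ m, ∃ i < N, cell N i ⊆ (g : I → I)^[m] '' Set.Icc c d := by
  obtain ⟨p, hp⟩ := pow_unbounded_of_one_lt (1 / ((d : ℝ) - c)) (one_lt_two)
  rw [div_lt_iff₀ (sub_pos.2 (show (c : ℝ) < d from hcd))] at hp
  induction p generalizing c d with
  | zero => linarith [d.2.2, c.2.1]
  | succ p ih =>
    rcases cell_subset_or_doubling hN hexp hcd with ⟨i, hi, h⟩ | ⟨c', d', hcd', hlen, hsub⟩
    · exact ⟨0, i, hi, by simpa using h⟩
    · obtain ⟨m, i, hi, h⟩ := ih hcd' (by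
        have : (0 : ℝ) < 2 ^ p := by positivity
        rw [pow_succ] at hp
        nlinarith)
      refine ⟨m + 1, i, hi, h.trans ?_⟩
      rw [Function.iterate_succ, Set.image_comp]
      exact Set.image_mono hsub

/-- A map that expands every cell, and maps every cell `J` over all the cells met by `f J` for some
transitive `f`, is transitive. -/
lemma transitive_of_expanding_cover {f g : C(I, I)} {N : ℕ} (hN : 0 < N) (hf : IsTransitiveMap f)
    (hexp : ∀ i < N, ∀ x ∈ cell N i, ∀ y ∈ cell N i, 4 * |(x : ℝ) - y| ≤ |(g x : ℝ) - g y|)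
    (hcov : ∀ i < N, ∀ j < N, ∀ x ∈ cell N i, f x ∈ cell N j → cell N j ⊆ g '' cell N i) :
    IsTransitiveMap g := by
  intro U V hU hV hUne hVne
  have hN' : (0 : ℝ) < N := by exact_mod_cast hN
  obtain ⟨c, d, hcd, hsub⟩ := hU.exists_Ioo_subset hUne
  obtain ⟨c', hc1, hc2⟩ := exists_between hcd
  obtain ⟨d', hd1, hd2⟩ := exists_between hc2
  obtain ⟨m, i, hi, hm⟩ := exists_cell_subset_iterate hN hexp hd1
  have hmU : cell N i ⊆ (g : I → I)^[m] '' U :=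
    hm.trans (Set.image_mono fun x hx => hsub ⟨hc1.trans_le hx.1, hx.2.trans_lt hd2⟩)
  have hnode : node N i < node N (i + 1) := by
    rw [← Subtype.coe_lt_coe]
    refine lt_of_mul_lt_mul_left ?_ hN'.le
    rw [mul_node hN hi.le, mul_node hN hi]
    push_cast; linarith
  obtain ⟨n, hn, x, hx, hxV⟩ := hf (Set.Ioo (node N i) (node N (i + 1))) V isOpen_Ioo hV
    (Set.nonempty_Ioo.2 hnode) hVne
  have hxi : x ∈ cell N i := by
    have h1 := mul_le_mul_of_nonneg_left (Subtype.coe_le_coe.2 hx.1.le) hN'.le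
    have h2 := mul_le_mul_of_nonneg_left (Subtype.coe_le_coe.2 hx.2.le) hN'.le
    rw [mul_node hN hi.le] at h1
    rw [mul_node hN hi] at h2
    exact ⟨h1, by push_cast at h2; exact h2⟩
  have key : ∀ q : ℕ, ∃ l < N, (f : I → I)^[q] x ∈ cell N l ∧
      cell N l ⊆ (g : I → I)^[m + q] '' U := by
    intro q
    induction q with
    | zero => exact ⟨i, hi, hxi, hmU⟩
    | succ q ih =>
      obtain ⟨l, hl, hxl, hlU⟩ := ih
      obtain ⟨l', hl', hxl'⟩ := exists_mem_cell hN (f ((f : I → I)^[q] x))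
      refine ⟨l', hl', by rwa [Function.iterate_succ_apply'],
        (hcov l hl l' hl' _ hxl hxl').trans ?_⟩
      rw [← add_assoc, Function.iterate_succ', Set.image_comp]
      exact Set.image_mono hlU
  obtain ⟨l, -, hxl, hlU⟩ := key n
  obtain ⟨u, hu, hux⟩ := hlU hxl
  refine ⟨m + n, by omega, u, hu, ?_⟩
  rw [Set.mem_preimage, hux]
  exact hxV

/-! ### Zigzags -/

/-- Piecewise linear interpolation of the values `v i` at the points `i / N`, `i ≤ N`, written as a
combination of hat functions so that it is visibly continuous in `v` and `x`. -/
noncomputable def interp (v : ℕ → ℝ) (N : ℕ) (x : ℝ) : ℝ :=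
  ∑ i ∈ Finset.range (N + 1), v i * max 0 (1 - |N * x - i|)

lemma interp_eq (v : ℕ → ℝ) {N i : ℕ} (hi : i < N) {x : I} (hx : x ∈ cell N i) :
    interp v N x = v i * (1 - (N * x - i)) + v (i + 1) * (N * x - i) := by
  obtain ⟨h1, h2⟩ := hx
  have hsub : ({i, i + 1} : Finset ℕ) ⊆ Finset.range (N + 1) := by
    intro j hj
    simp only [Finset.mem_insert, Finset.mem_singleton] at hj
    rw [Finset.mem_range]
    omega
  rw [interp, ← Finset.sum_subset hsub, Finset.sum_pair (by omega)]
  · congr 2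
    · rw [abs_of_nonneg (by linarith), max_eq_right (by linarith)]
    · push_cast
      rw [abs_of_nonpos (by linarith), max_eq_right (by linarith)]
      ring
  · intro j _ hj
    simp only [Finset.mem_insert, Finset.mem_singleton, not_or] at hj
    rw [max_eq_left, mul_zero]
    rcases lt_or_gt_of_ne hj.1 with h | h
    · have : (j : ℝ) + 1 ≤ i := by exact_mod_cast h
      linarith [le_abs_self ((N : ℝ) * x - j)]
    · have : (i : ℝ) + 2 ≤ j := by
        have : i + 2 ≤ j := by omega
        exact_mod_cast this
      linarith [neg_abs_le ((N : ℝ) * x - j)]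

/-- The value at the `i`-th node of the zigzag of height `η` around `f`, clamped to `[0, 1]`. -/
noncomputable def zigVal (f : C(I, I)) (η : ℝ) (N i : ℕ) : ℝ :=
  max 0 (min 1 ((f (node N i) : ℝ) + (-1) ^ i * η))

/-- The zigzag of height `η` with `N` cells around `f`. For `0 < N` the outer projection to `[0, 1]`
acts trivially, see `zigzag_coe`. -/
noncomputable def zigzag (f : C(I, I)) (η : ℝ) (N : ℕ) : C(I, I) where
  toFun x := Set.projIcc 0 1 zero_le_one (interp (zigVal f η N) N x)
  continuous_toFun := by
    refine continuous_projIcc.comp ?_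
    unfold interp
    fun_prop

lemma zigVal_mem (f : C(I, I)) (η : ℝ) (N i : ℕ) : 0 ≤ zigVal f η N i ∧ zigVal f η N i ≤ 1 :=
  ⟨le_max_left _ _, max_le zero_le_one (min_le_left _ _)⟩

lemma zigzag_coe (f : C(I, I)) (η : ℝ) {N i : ℕ} (hi : i < N) {x : I} (hx : x ∈ cell N i) :
    (zigzag f η N x : ℝ) =
      zigVal f η N i * (1 - (N * x - i)) + zigVal f η N (i + 1) * (N * x - i) := by
  have h := interp_eq (zigVal f η N) hi hx
  obtain ⟨h1, h2⟩ := hx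
  have a := zigVal_mem f η N i
  have b := zigVal_mem f η N (i + 1)
  have hmem : interp (zigVal f η N) N x ∈ Set.Icc (0 : ℝ) 1 := by
    rw [h]
    constructor <;> nlinarith
  rw [← h]
  change ((Set.projIcc 0 1 zero_le_one (interp (zigVal f η N) N x) : I) : ℝ) = _
  rw [Set.projIcc_of_mem _ hmem]

lemma zigzag_node_left (f : C(I, I)) (η : ℝ) {N i : ℕ} (hN : 0 < N) (hi : i < N) :
    (zigzag f η N (node N i) : ℝ) = zigVal f η N i := by
  rw [zigzag_coe f η hi (node_mem_cell_left hN hi), mul_node hN hi.le]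
  ring

lemma zigzag_node_right (f : C(I, I)) (η : ℝ) {N i : ℕ} (hN : 0 < N) (hi : i < N) :
    (zigzag f η N (node N (i + 1)) : ℝ) = zigVal f η N (i + 1) := by
  rw [zigzag_coe f η hi (node_mem_cell_right hN hi), mul_node hN hi]
  push_cast
  ring

/-- The subdivision into `N` cells is fine enough for the zigzag of height `η` around `f`. -/
structure IsFine (f : C(I, I)) (η : ℝ) (N : ℕ) : Prop where
  pos : 0 < N
  height_pos : 0 < η
  height_le : η ≤ 1
  four_le : 4 ≤ N * η
  osc : ∀ i < N, ∀ x ∈ cell N i, ∀ y ∈ cell N i, |(f x : ℝ) - f y| ≤ η / 4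

section
variable {f : C(I, I)} {η : ℝ} {N : ℕ}

lemma zigVal_even {i : ℕ} (hi : Even i) :
    zigVal f η N i = max 0 (min 1 ((f (node N i) : ℝ) + η)) := by
  rw [zigVal, hi.neg_one_pow, one_mul]

lemma zigVal_odd {i : ℕ} (hi : Odd i) :
    zigVal f η N i = max 0 (min 1 ((f (node N i) : ℝ) - η)) := by
  rw [zigVal, hi.neg_one_pow, neg_one_mul, sub_eq_add_neg]

/-- Over each cell the zigzag rises or falls by at least `η`, with room to spare around `f`. -/
lemma IsFine.zigVal_bounds (h : IsFine f η N) {i : ℕ} (hi : i < N) {x : I} (hx : x ∈ cell N i) :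
    (Even i → zigVal f η N (i + 1) + η ≤ zigVal f η N i) ∧
    (Odd i → zigVal f η N i + η ≤ zigVal f η N (i + 1)) ∧
    ∀ y : I, |(y : ℝ) - f x| ≤ η / 4 →
      (y : ℝ) ∈ Set.uIcc (zigVal f η N i) (zigVal f η N (i + 1)) := by
  have hη := h.height_pos
  have hη1 := h.height_le
  have h1 := abs_le.1 (h.osc i hi x hx _ (node_mem_cell_left h.pos hi))
  have h2 := abs_le.1 (h.osc i hi x hx _ (node_mem_cell_right h.pos hi))
  have p0 := (f x).2.1
  have p1 := (f x).2.2
  have q0 := (f (node N i)).2.1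
  have q1 := (f (node N i)).2.2
  have r0 := (f (node N (i + 1))).2.1
  have r1 := (f (node N (i + 1))).2.2
  refine ⟨fun he => ?_, fun ho => ?_, fun y hy => ?_⟩
  · rw [zigVal_even he, zigVal_odd he.add_one]
    grind
  · rw [zigVal_odd ho, zigVal_even ho.add_one]
    grind
  · have hy' := abs_le.1 hy
    have y0 := y.2.1
    have y1 := y.2.2
    rcases Nat.even_or_odd i with he | ho
    · rw [zigVal_even he, zigVal_odd he.add_one, Set.mem_uIcc]
      right
      constructor
      · exact max_le y0 ((min_le_right _ _).trans (by linarith))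
      · exact le_max_of_le_right (le_min y1 (by linarith))
    · rw [zigVal_odd ho, zigVal_even ho.add_one, Set.mem_uIcc]
      left
      constructor
      · exact max_le y0 ((min_le_right _ _).trans (by linarith))
      · exact le_max_of_le_right (le_min y1 (by linarith))

lemma IsFine.height_le_abs (h : IsFine f η N) {i : ℕ} (hi : i < N) :
    η ≤ |zigVal f η N (i + 1) - zigVal f η N i| := by
  obtain ⟨h1, h2, -⟩ := h.zigVal_bounds hi (node_mem_cell_left h.pos hi)
  rcases Nat.even_or_odd i with he | ho
  · rw [abs_sub_comm]
    exact le_trans (by linarith [h1 he]) (le_abs_self _)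
  · exact le_trans (by linarith [h2 ho]) (le_abs_self _)

lemma IsFine.transitive (h : IsFine f η N) (hf : IsTransitiveMap f) :
    IsTransitiveMap (zigzag f η N) := by
  have hN' : (0 : ℝ) < N := by exact_mod_cast h.pos
  refine transitive_of_expanding_cover h.pos hf ?_ ?_
  · intro i hi x hx y hy
    rw [zigzag_coe f η hi hx, zigzag_coe f η hi hy]
    have e : zigVal f η N i * (1 - (N * x - i)) + zigVal f η N (i + 1) * (N * x - i) -
        (zigVal f η N i * (1 - (N * y - i)) + zigVal f η N (i + 1) * (N * y - i)) =
        (zigVal f η N (i + 1) - zigVal f η N i) * N * ((x : ℝ) - y) := by ring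
    rw [e, abs_mul, abs_mul, abs_of_pos hN']
    refine mul_le_mul_of_nonneg_right ?_ (abs_nonneg _)
    nlinarith [h.height_le_abs hi, h.four_le]
  · intro i hi j hj x hx hfx y hy
    have hyx : |(y : ℝ) - f x| ≤ η / 4 := by
      have h4 := h.four_le
      have a1 : (N : ℝ) * (y - f x) ≤ N * (η / 4) := by linarith [hfx.1, hy.2]
      have a2 : (N : ℝ) * (f x - y) ≤ N * (η / 4) := by linarith [hfx.2, hy.1]
      rw [abs_le]
      constructor
      · linarith [le_of_mul_le_mul_left a2 hN']
      · exact le_of_mul_le_mul_left a1 hN'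
    have hmem := (h.zigVal_bounds hi hx).2.2 y hyx
    have hle : node N i ≤ node N (i + 1) := by
      rw [← Subtype.coe_le_coe]
      refine le_of_mul_le_mul_left ?_ hN'
      rw [mul_node h.pos hi.le, mul_node h.pos hi]
      push_cast; linarith
    refine uIcc_subset_image (zigzag f η N) (node N i) (node N (i + 1)) ?_ ?_
    · rw [Set.uIcc_of_le hle]
      intro z hz
      exact ⟨(node_mem_cell_left h.pos hi).1.trans
          (mul_le_mul_of_nonneg_left (Subtype.coe_le_coe.2 hz.1) hN'.le),
        (mul_le_mul_of_nonneg_left (Subtype.coe_le_coe.2 hz.2) hN'.le).trans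
          (node_mem_cell_right h.pos hi).2⟩
    · rw [Set.mem_uIcc] at hmem ⊢
      simpa only [← Subtype.coe_le_coe, zigzag_node_left f η h.pos hi,
        zigzag_node_right f η h.pos hi] using hmem

lemma abs_zigVal_sub_le (hη : 0 ≤ η) (i : ℕ) : |zigVal f η N i - f (node N i)| ≤ η := by
  have q0 := (f (node N i)).2.1
  have q1 := (f (node N i)).2.2
  rw [abs_le]
  rcases Nat.even_or_odd i with he | ho
  · rw [zigVal_even he]
    grind
  · rw [zigVal_odd ho]
    grind

lemma IsFine.dist_lt (h : IsFine f η N) : dist f (zigzag f η N) < 4 * η := by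
  have hη := h.height_pos
  rw [ContinuousMap.dist_lt_iff (by linarith)]
  intro x
  obtain ⟨i, hi, hx⟩ := exists_mem_cell h.pos x
  have h1 := abs_le.1 (h.osc i hi x hx _ (node_mem_cell_left h.pos hi))
  have h2 := abs_le.1 (h.osc i hi x hx _ (node_mem_cell_right h.pos hi))
  have h3 := abs_le.1 (abs_zigVal_sub_le (f := f) (N := N) hη.le i)
  have h4 := abs_le.1 (abs_zigVal_sub_le (f := f) (N := N) hη.le (i + 1))
  rw [Subtype.dist_eq, Real.dist_eq, zigzag_coe f η hi hx, abs_lt]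
  obtain ⟨t0, t1⟩ := hx
  constructor <;> nlinarith

end

/-- Zigzags with different numbers of cells differ: the one with fewer cells is still decreasing
just to the right of the first turning point of the other. -/
lemma zigzag_ne {f f' : C(I, I)} {η η' : ℝ} {N N' : ℕ} (h : IsFine f η N) (h' : IsFine f' η' N')
    (hlt : N < N') : zigzag f η N ≠ zigzag f' η' N' := by
  intro heq
  have hN : (0 : ℝ) < N := by exact_mod_cast h.pos
  have hN' : (0 : ℝ) < N' := by exact_mod_cast h'.pos
  have hlt' : (N : ℝ) < N' := by exact_mod_cast hlt
  have h1 : 1 < N' := lt_of_le_of_lt h.pos hlt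
  set a := node N' 1 with ha
  have haN : (N' : ℝ) * a = 1 := by rw [ha, mul_node h'.pos h1.le]; simp
  have ha0 : (0 : ℝ) < a := by
    by_contra hc
    nlinarith
  have hab : ∃ b : I, (a : ℝ) < b ∧ (N : ℝ) * b ≤ 1 ∧ (N' : ℝ) * b ≤ 2 := by
    have hm1 : (1 : ℝ) / N ≤ 1 := by
      rw [div_le_one hN]
      exact_mod_cast h.pos
    refine ⟨⟨min (1 / N) (2 / N'), by positivity, (min_le_left _ _).trans hm1⟩, ?_, ?_, ?_⟩
    · refine lt_min ?_ ?_
      · rw [lt_div_iff₀ hN]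
        nlinarith
      · rw [lt_div_iff₀ hN']
        linarith
    · have := mul_le_mul_of_nonneg_left (min_le_left ((1 : ℝ) / N) (2 / N')) hN.le
      rwa [mul_one_div_cancel hN.ne'] at this
    · have := mul_le_mul_of_nonneg_left (min_le_right ((1 : ℝ) / N) (2 / N')) hN'.le
      rwa [mul_div_cancel₀ _ hN'.ne'] at this
  obtain ⟨b, hb, hbN, hbN'⟩ := hab
  have hac : a ∈ cell N 0 := ⟨by simpa using mul_nonneg hN.le a.2.1, by push_cast; nlinarith⟩
  have hbc : b ∈ cell N 0 := ⟨by simpa using mul_nonneg hN.le b.2.1, by push_cast; linarith⟩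
  have hac' : a ∈ cell N' 1 := ⟨by push_cast; linarith, by push_cast; linarith⟩
  have hbc' : b ∈ cell N' 1 := ⟨by push_cast; nlinarith, by push_cast; linarith⟩
  have e1 := zigzag_coe f η h.pos hac
  have e2 := zigzag_coe f η h.pos hbc
  have e3 := zigzag_coe f' η' h1 hac'
  have e4 := zigzag_coe f' η' h1 hbc'
  have d1 := (h.zigVal_bounds h.pos (node_mem_cell_left h.pos h.pos)).1 (by simp)
  have d2 := (h'.zigVal_bounds h1 (node_mem_cell_left h'.pos h1)).2.1 (by simp)
  have hη := h.height_pos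
  have hη' := h'.height_pos
  have k1 : (zigzag f η N b : ℝ) < zigzag f η N a := by
    rw [e1, e2]
    have : 0 < (zigVal f η N 0 - zigVal f η N (0 + 1)) * (N * (b - a)) :=
      mul_pos (by linarith) (mul_pos hN (by linarith))
    linarith
  have k2 : (zigzag f' η' N' a : ℝ) < zigzag f' η' N' b := by
    rw [e3, e4]
    have : 0 < (zigVal f' η' N' (1 + 1) - zigVal f' η' N' 1) * (N' * (b - a)) :=
      mul_pos (by linarith) (mul_pos hN' (by linarith))
    linarith
  rw [heq] at k1
  exact lt_asymm k1 k2

/-! ### Families of zigzags -/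

lemma continuous_zigzag {K : Type} [TopologicalSpace K] {F : K → C(I, I)} (hF : Continuous F)
    {η : K → ℝ} (hη : Continuous η) (N : ℕ) : Continuous fun k => zigzag (F k) (η k) N := by
  refine ContinuousMap.continuous_of_continuous_uncurry _ ?_
  change Continuous fun p : K × I =>
    (Set.projIcc 0 1 zero_le_one (interp (zigVal (F p.1) (η p.1) N) N p.2) : I)
  refine continuous_projIcc.comp ?_
  unfold interp zigVal
  fun_prop

lemma eventually_isFine {K : Type} [MetricSpace K] [CompactSpace K] {F : K → C(I, I)}
    (hF : Continuous F) {η : K → ℝ} (hη : Continuous η) (h0 : ∀ k, 0 < η k) (h1 : ∀ k, η k ≤ 1) :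
    ∀ᶠ N : ℕ in Filter.atTop, ∀ k, IsFine (F k) (η k) N := by
  obtain ⟨c, hc, hcη⟩ := isCompact_univ.exists_forall_le' hη.continuousOn (a := 0)
    fun k _ => h0 k
  have huc : UniformContinuous fun p : K × I => (F p.1 p.2 : ℝ) :=
    CompactSpace.uniformContinuous_of_continuous (by fun_prop)
  obtain ⟨δ, hδ, hδF⟩ := Metric.uniformContinuous_iff.1 huc (c / 4) (by linarith)
  filter_upwards [Filter.eventually_gt_atTop 0,
    tendsto_natCast_atTop_atTop.eventually_ge_atTop (4 / c),
    tendsto_natCast_atTop_atTop.eventually_gt_atTop (1 / δ)] with N hN hNc hNδ k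
  have hN' : (0 : ℝ) < N := by exact_mod_cast hN
  rw [div_le_iff₀ hc] at hNc
  rw [div_lt_iff₀ hδ] at hNδ
  have hck := hcη k trivial
  refine ⟨hN, h0 k, h1 k, by nlinarith, fun i hi x hx y hy => ?_⟩
  have hxy : dist (k, x) (k, y) < δ := by
    rw [Prod.dist_eq, dist_self, max_eq_right dist_nonneg, Subtype.dist_eq, Real.dist_eq, abs_lt]
    constructor
    · refine lt_of_mul_lt_mul_left ?_ hN'.le
      linarith [hx.1, hy.2]
    · refine lt_of_mul_lt_mul_left ?_ hN'.le
      linarith [hx.2, hy.1]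
  have := hδF hxy
  rw [Real.dist_eq] at this
  linarith

/-- Fine zigzags that stay close to a given `h` have boundedly many cells, as long as their heights
are bounded below: they jump by the height over a distance `1 / N`. -/
lemma exists_bound_of_near (h : C(I, I)) {c : ℝ} (hc : 0 < c) :
    ∃ N₀ : ℕ, ∀ (f : C(I, I)) (η : ℝ) (N : ℕ), IsFine f η N → c ≤ η →
      dist (zigzag f η N) h < c / 4 → N < N₀ := by
  have huc : UniformContinuous h := CompactSpace.uniformContinuous_of_continuous h.continuous
  obtain ⟨δ, hδ, hδh⟩ := Metric.uniformContinuous_iff.1 huc (c / 4) (by linarith)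
  obtain ⟨N₀, hN₀⟩ := exists_nat_gt (1 / δ)
  refine ⟨N₀, fun f η N hfine hcη hdist => ?_⟩
  by_contra hge
  push Not at hge
  have hN' : (0 : ℝ) < N := by exact_mod_cast hfine.pos
  have hNδ : 1 / δ < N := hN₀.trans_le (by exact_mod_cast hge)
  rw [div_lt_iff₀ hδ] at hNδ
  have hnode : dist (node N (0 + 1)) (node N 0) < δ := by
    rw [Subtype.dist_eq, Real.dist_eq, node_coe hfine.pos hfine.pos,
      node_coe hfine.pos (Nat.zero_le _)]
    simp only [Nat.cast_one, Nat.cast_zero, zero_div, sub_zero]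
    rw [abs_of_pos (by positivity), div_lt_iff₀ hN']
    linarith
  have hh := hδh hnode
  have hjump := hfine.height_le_abs hfine.pos
  rw [← zigzag_node_left f η hfine.pos hfine.pos, ← zigzag_node_right f η hfine.pos hfine.pos,
    ← Real.dist_eq, ← Subtype.dist_eq] at hjump
  have d0 := ContinuousMap.dist_apply_le_dist (f := zigzag f η N) (g := h) (node N 0)
  have d1 := ContinuousMap.dist_apply_le_dist (f := zigzag f η N) (g := h) (node N (0 + 1))
  have t := dist_triangle4 (zigzag f η N (node N (0 + 1))) (h (node N (0 + 1))) (h (node N 0))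
    (zigzag f η N (node N 0))
  rw [dist_comm (h (node N 0))] at t
  linarith

theorem transSet_has_SDAP :
    ∀ (ε : ↥TransSet → ℝ), Continuous ε → (∀ x, ε x ∈ Set.Ioo (0 : ℝ) 1) →
    ∀ (K : Type) [MetricSpace K] [CompactSpace K],
    ∀ f : K × ℕ → ↥TransSet, Continuous f →
      ∃ g : K × ℕ → ↥TransSet, Continuous g ∧
        (∀ x : ↥TransSet, ∃ U ∈ nhds x, ∀ n m : ℕ,
          (U ∩ Set.range fun k : K => g (k, n)).Nonempty →
          (U ∩ Set.range fun k : K => g (k, m)).Nonempty → n = m) ∧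
        (∀ (k : K) (n : ℕ), dist (f (k, n)) (g (k, n)) < ε (f (k, n))) := by
  intro ε hε hε01 K _ _ f hf
  have hfn : ∀ n, Continuous fun k => f (k, n) := fun n => by fun_prop
  have hηn : ∀ n, Continuous fun k => ε (f (k, n)) / 4 := fun n =>
    (hε.comp (hfn n)).div_const 4
  obtain ⟨N, hNmono, hN⟩ := Filter.extraction_forall_of_eventually fun n =>
    eventually_isFine (continuous_subtype_val.comp (hfn n)) (hηn n)
      (fun k => by linarith [(hε01 (f (k, n))).1]) (fun k => by linarith [(hε01 (f (k, n))).2])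
  let g : K × ℕ → ↥TransSet := fun p =>
    ⟨zigzag (f p).1 (ε (f p) / 4) (N p.2), (hN p.2 p.1).transitive (f p).2⟩
  have hgn : ∀ n, Continuous fun k => g (k, n) := fun n =>
    (continuous_zigzag (continuous_subtype_val.comp (hfn n)) (hηn n) (N n)).subtype_mk _
  have hdist : ∀ k n, dist (f (k, n)) (g (k, n)) < ε (f (k, n)) := fun k n => by
    have := (hN n k).dist_lt
    rw [mul_div_cancel₀ _ (by norm_num)] at this
    exact this
  refine ⟨g, continuous_prod_of_discrete_right.2 hgn, fun h => ?_, hdist⟩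
  have hdisj : ∀ n m k k', g (k, n) = g (k', m) → n = m := by
    intro n m k k' heq
    have heq' := congrArg Subtype.val heq
    rcases lt_trichotomy n m with hlt | hlt | hlt
    · exact absurd heq' (zigzag_ne (hN n k) (hN m k') (hNmono hlt))
    · exact hlt
    · exact absurd heq'.symm (zigzag_ne (hN m k') (hN n k) (hNmono hlt))
  -- Near `h`, the values `ε (f (k, n))` are bounded below by `c`.
  obtain ⟨r, hr, hrε⟩ := Metric.eventually_nhds_iff.1
    (hε.continuousAt.eventually (lt_mem_nhds (half_lt_self (hε01 h).1)))
  set c := min (ε h / 2) (r / 2) with hcdef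
  have hc : 0 < c := lt_min (half_pos (hε01 h).1) (half_pos hr)
  have hlow : ∀ k n, dist (g (k, n)) h < r / 2 → c ≤ ε (f (k, n)) := by
    intro k n hg
    by_cases hfh : dist (f (k, n)) h < r
    · exact (min_le_left _ _).trans (hrε hfh).le
    · refine (min_le_right _ _).trans ?_
      linarith [hdist k n, dist_triangle (f (k, n)) (g (k, n)) h]
  obtain ⟨N₀, hN₀⟩ := exists_bound_of_near h.1 (c := c / 4) (by linarith)
  have hfin : ∀ k n, dist (g (k, n)) h < min (r / 2) (c / 16) → n < N₀ := by
    intro k n hg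
    have := hN₀ _ _ _ (hN n k)
      (by linarith [hlow k n (hg.trans_le (min_le_left _ _))])
      (by
        have := hg.trans_le (min_le_right _ _)
        change dist (zigzag _ _ _) h.1 < _ at this
        exact this.trans_eq (by ring))
    exact (hNmono.id_le n).trans_lt this
  -- Remove the finitely many compact images that come near `h` without containing it.
  have hrem : ∀ᶠ x in nhds h, ∀ n ∈ Set.Iio N₀,
      h ∉ Set.range (fun k => g (k, n)) → x ∉ Set.range fun k => g (k, n) := by
    rw [Filter.eventually_all_finite (Set.finite_Iio N₀)]
    intro n _
    by_cases hn : h ∈ Set.range fun k => g (k, n)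
    · exact Filter.Eventually.of_forall fun x hx => absurd hn hx
    · filter_upwards [(isCompact_range (hgn n)).isClosed.isOpen_compl.mem_nhds hn] with x hx _
      exact hx
  have hball := Metric.ball_mem_nhds h (lt_min (half_pos hr) (by linarith : 0 < c / 16))
  refine ⟨_, Filter.inter_mem hball hrem, ?_⟩
  have key : ∀ n, ((Metric.ball h (min (r / 2) (c / 16)) ∩ {x | ∀ n ∈ Set.Iio N₀,
      h ∉ Set.range (fun k => g (k, n)) → x ∉ Set.range fun k => g (k, n)}) ∩
      Set.range fun k : K => g (k, n)).Nonempty → h ∈ Set.range fun k => g (k, n) := by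
    rintro n ⟨x, ⟨hx1, hx2⟩, k, rfl⟩
    by_contra hh
    exact hx2 n (hfin k n hx1) hh ⟨k, rfl⟩
  intro n m hn hm
  obtain ⟨k, hk⟩ := key n hn
  obtain ⟨k', hk'⟩ := key m hm
  exact hdisj n m k k' (hk.trans hk'.symm)
end

section
/- The space T(I), with the subspace topology inherited from C(I), is topologically complete (completely metrizable); in particular T(I) is a Polish space. -/
/-!
A `Gδ` subset of a Polish space is Polish (Alexandrov), so it suffices that `TransSet` is a `Gδ`
in the Polish space `C(I, I)`. Transitivity only has to be tested on pairs `U, V` of nonempty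
members of a countable base of `I`, and for fixed `U, V` the maps `f` that carry some point of `U`
into `V` in a positive number of steps form an open set, because `f ↦ f^[n] x` is continuous.
-/

open unitInterval

/-- Alexandrov's theorem. Writing `s = ⋂ n, t n` with `t n` open, hence Polish, the diagonal map
embeds `s` as a closed subspace of `Π n, t n`. -/
theorem IsGδ.polishSpace_coe {X : Type*} [TopologicalSpace X] [PolishSpace X] {s : Set X}
    (hs : IsGδ s) : PolishSpace s := by
  obtain ⟨t, ht, rfl⟩ := isGδ_iff_eq_iInter_nat.1 hs
  have hP : ∀ n, PolishSpace (t n) := fun n => (ht n).polishSpace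
  let d : ↥(⋂ n, t n) → (∀ n, t n) := fun x n => ⟨x.1, Set.mem_iInter.1 x.2 n⟩
  have hd : Continuous d := by
    refine continuous_pi fun n => ?_
    exact continuous_subtype_val.subtype_mk _
  have hp : Continuous fun y : (∀ n, t n) => (y 0 : X) := by fun_prop
  have hrange : Set.range d = ⋂ n, {y : (∀ n, t n) | (y n : X) = y 0} := by
    ext y
    simp only [Set.mem_range, Set.mem_iInter, Set.mem_ofPred_eq]
    constructor
    · rintro ⟨x, rfl⟩ n
      rfl
    · intro h
      refine ⟨⟨y 0, Set.mem_iInter.2 fun n => ?_⟩, ?_⟩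
      · rw [← h n]
        exact (y n).2
      · funext n
        exact Subtype.ext (h n).symm
  have hcl : IsClosed (Set.range d) := by
    rw [hrange]
    exact isClosed_iInter fun n => isClosed_eq (by fun_prop) hp
  have hemb : Topology.IsEmbedding d :=
    Topology.IsEmbedding.of_comp hd hp Topology.IsEmbedding.subtypeVal
  exact Topology.IsClosedEmbedding.polishSpace ⟨hemb, hcl⟩

theorem continuous_iterate_eval (n : ℕ) (x : I) :
    Continuous fun f : C(I, I) => (f : I → I)^[n] x := by
  induction n with
  | zero => exact continuous_const
  | succ k ih =>
    simp only [Function.iterate_succ_apply']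
    exact continuous_id.eval ih

theorem isOpen_setOf_hits (U : Set I) {V : Set I} (hV : IsOpen V) :
    IsOpen {f : C(I, I) | ∃ n : ℕ, 0 < n ∧ (U ∩ (f : I → I)^[n] ⁻¹' V).Nonempty} := by
  have h : {f : C(I, I) | ∃ n : ℕ, 0 < n ∧ (U ∩ (f : I → I)^[n] ⁻¹' V).Nonempty} =
      ⋃ n : ℕ, ⋃ _ : 0 < n, ⋃ x ∈ U, {f : C(I, I) | (f : I → I)^[n] x ∈ V} := by
    ext f
    simp only [Set.mem_ofPred_eq, Set.mem_iUnion, Set.Nonempty, Set.mem_inter_iff, Set.mem_preimage,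
      exists_prop]
  rw [h]
  exact isOpen_iUnion fun n => isOpen_iUnion fun _ => isOpen_biUnion fun x _ =>
    hV.preimage (continuous_iterate_eval n x)

theorem isGδ_transSet : IsGδ TransSet := by
  have hB := TopologicalSpace.isBasis_countableBasis I
  have hc := TopologicalSpace.countable_countableBasis I
  have h : TransSet = ⋂ U ∈ TopologicalSpace.countableBasis I,
      ⋂ V ∈ TopologicalSpace.countableBasis I,
        {f : C(I, I) | ∃ n : ℕ, 0 < n ∧ (U ∩ (f : I → I)^[n] ⁻¹' V).Nonempty} := by
    ext f
    simp only [Set.mem_iInter]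
    constructor
    · intro hf U hU V hV
      exact hf U V (hB.isOpen hU) (hB.isOpen hV) (TopologicalSpace.nonempty_of_mem_countableBasis hU)
        (TopologicalSpace.nonempty_of_mem_countableBasis hV)
    · rintro hf U V hU hV ⟨x, hx⟩ ⟨y, hy⟩
      obtain ⟨U', hU', -, hUU⟩ := hB.exists_subset_of_mem_open hx hU
      obtain ⟨V', hV', -, hVV⟩ := hB.exists_subset_of_mem_open hy hV
      obtain ⟨n, hn, hne⟩ := hf U' hU' V' hV'
      exact ⟨n, hn, hne.mono (Set.inter_subset_inter hUU (Set.preimage_mono hVV))⟩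
  rw [h]
  exact IsGδ.biInter hc fun U _ => IsGδ.biInter hc fun V hV =>
    (isOpen_setOf_hits U (hB.isOpen hV)).isGδ

/-- `T(I)` with the subspace topology is completely metrizable; in particular it is Polish. -/
theorem transSet_topologically_complete :
    (∃ m : MetricSpace ↥TransSet,
        m.toUniformSpace.toTopologicalSpace = (inferInstance : TopologicalSpace ↥TransSet) ∧
        @CompleteSpace ↥TransSet m.toUniformSpace) ∧
    PolishSpace ↥TransSet := by
  have hP : PolishSpace ↥TransSet := isGδ_transSet.polishSpace_coe
  exact ⟨hP.toIsCompletelyMetrizableSpace.1, hP⟩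
end
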